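/- The subspace similarity in an SP-structure satisfies the continuity inequality s(A,B) ≤ s(A,C) + (1/2)√(1 − s(B,C)) + (1 − s(B,C)) for all subspaces A, B, C. -/

import Mathlib

variable {Ω : Type*}

/-- A set of pairwise orthogonal points. -/
def OrthoSet (s : Ω → Ω → ℝ) (A : Set Ω) : Prop :=
  ∀ x ∈ A, ∀ y ∈ A, x ≠ y → s x y = 0

/-- The subspace generated by an ortho-set `A`: the points whose total
similarity to `A` equals `1`. -/
def SpanOf (s : Ω → Ω → ℝ) (A : Set Ω) : Set Ω :=
  {x : Ω | (∑' y : A, s x (y : Ω)) = 1}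

/-- A subspace is a set of the form `SpanOf s A` for an ortho-set `A` (a basis). -/
def IsSubspace (s : Ω → Ω → ℝ) (B : Set Ω) : Prop :=
  ∃ A : Set Ω, OrthoSet s A ∧ B = SpanOf s A

/-- Orthogonal complement of a subset. -/
def Perp (s : Ω → Ω → ℝ) (A : Set Ω) : Set Ω :=
  {x : Ω | ∀ y ∈ A, s x y = 0}

/-- The sum of two subsets: the smallest subspace including their union. -/
def Oplus (s : Ω → Ω → ℝ) (A B : Set Ω) : Set Ω :=
  ⋂₀ {X : Set Ω | IsSubspace s X ∧ A ∪ B ⊆ X}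

open scoped Classical

/-- `x` is orthogonal to the set `A`. -/
def PerpPt (s : Ω → Ω → ℝ) (x : Ω) (A : Set Ω) : Prop :=
  ∀ y ∈ A, s x y = 0

/-- Similarity of the subspaces `A` and `B` from the vantage point `x`,
given the projection map `t` and the point-to-subspace similarity `sP`. -/
noncomputable def tauSim (s : Ω → Ω → ℝ) (t : Ω → Set Ω → Ω) (sP : Ω → Set Ω → ℝ)
    (x : Ω) (A B : Set Ω) : ℝ :=
  if PerpPt s x A then 1 - sP x B
  else if PerpPt s x B then 1 - sP x A
  else s (t x A) (t x B)

/-- Similarity of two subspaces: the infimum over all vantage points. -/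
noncomputable def simSub (s : Ω → Ω → ℝ) (t : Ω → Set Ω → Ω) (sP : Ω → Set Ω → ℝ)
    (A B : Set Ω) : ℝ :=
  sInf (Set.range fun x : Ω => tauSim s t sP x A B)

/-!
Fix a vantage point `x`, and let `a`, `c` be its projections on `A` and `C`. The only case in which
the inequality for points does not settle the matter at once is `x ⊥ B` with `x` orthogonal to
neither `A` nor `C`. Let then `b` be the projection of `c` on `B`: it suffices to prove
`s(A, B) ≤ s(a, b)`. Projecting `c` on the span of `{b, x}` yields a point `p` of that span
orthogonal to neither `b` nor `x`.

* If some `z ∈ B` satisfies `0 < s(b, z) < 1`, projecting `p` back and forth between the spans of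
  `{z, x}` and `{b, x}` produces points `w` that tend to `x`. They all project on `b` in `B`, so
  `s(A, B) ≤ s(t(w, A), b)`, and `t(w, A)` tends to `a`.
* Otherwise every point of `B` other than `b` is orthogonal to `b`. If `a` did not project on `b`,
  the projection on `A` of its projection on `B` would be orthogonal to `b` and to `p`, hence to
  `x`, which it is not. So `a` projects on `b`, and `s(A, B) ≤ s(a, b)` is the bound from `a`.
-/

open Filter Topology

/-- The laws of an SP-structure with similarity `s`, where `t x A` is the projection of `x` on the
subspace `A`. Boundedness is only required for pairs of orthogonal points. -/
structure IsSPStructure (s : Ω → Ω → ℝ) (t : Ω → Set Ω → Ω) : Prop where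
  nonneg : ∀ x y, 0 ≤ s x y
  le_one : ∀ x y, s x y ≤ 1
  eq_one_iff : ∀ x y, s x y = 1 ↔ x = y
  symm : ∀ x y, s x y = s y x
  proj_mem : ∀ x A, IsSubspace s A → ¬ PerpPt s x A → t x A ∈ A
  sim_eq_mul : ∀ x A, IsSubspace s A → ¬ PerpPt s x A → ∀ y ∈ A, s x y = s x (t x A) * s (t x A) y
  add_le_one : ∀ x y z, s y z = 0 → s x y + s x z ≤ 1

/-- An SP-structure together with its similarity `sP` between points and subspaces. No
constraint is put on `sP x A` when `A` is not a subspace. -/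
structure IsPointedSPStructure (s : Ω → Ω → ℝ) (t : Ω → Set Ω → Ω) (sP : Ω → Set Ω → ℝ) : Prop
    extends IsSPStructure s t where
  sP_of_not_perp : ∀ x A, IsSubspace s A → ¬ PerpPt s x A → sP x A = s x (t x A)
  sP_of_perp : ∀ x A, IsSubspace s A → PerpPt s x A → sP x A = 0

/-- `φ` is a modulus of continuity of the similarity `s`, with `1 - s x y` in the role of the
distance between `x` and `y`. For the lines of a Hilbert space one can take `φ u = √u`. -/
structure IsSimModulus (s : Ω → Ω → ℝ) (φ : ℝ → ℝ) : Prop where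
  monotone : Monotone φ
  self_le : ∀ u ∈ Set.Icc (0 : ℝ) 1, u ≤ φ u
  tendsto_zero : Tendsto φ (𝓝 0) (𝓝 0)
  sim_le_sim_add : ∀ x y z, s z x ≤ s z y + φ (1 - s x y)

section

variable {s : Ω → Ω → ℝ} {t : Ω → Set Ω → Ω} {sP : Ω → Set Ω → ℝ} {φ : ℝ → ℝ}
  {A B C : Set Ω} {a b c d p v w x y z : Ω} {r : ℝ}

namespace IsSPStructure

theorem sim_self (h : IsSPStructure s t) (x : Ω) : s x x = 1 :=
  (h.eq_one_iff x x).2 rfl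

theorem not_perp_of_mem (h : IsSPStructure s t) (hx : x ∈ A) : ¬ PerpPt s x A := fun hperp =>
  one_ne_zero ((h.sim_self x).symm.trans (hperp x hx))

theorem sim_proj_pos (h : IsSPStructure s t) (hA : IsSubspace s A) (hx : ¬ PerpPt s x A) :
    0 < s x (t x A) := by
  refine (h.nonneg _ _).lt_of_ne' fun h0 => hx fun y hy => ?_
  rw [h.sim_eq_mul x A hA hx y hy, h0, zero_mul]

theorem sim_le_sim_proj (h : IsSPStructure s t) (hA : IsSubspace s A) (hx : ¬ PerpPt s x A)
    (hy : y ∈ A) : s x y ≤ s x (t x A) := by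
  rw [h.sim_eq_mul x A hA hx y hy]
  exact mul_le_of_le_one_right (h.nonneg _ _) (h.le_one _ _)

theorem sim_proj_eq_zero_iff (h : IsSPStructure s t) (hA : IsSubspace s A)
    (hx : ¬ PerpPt s x A) (hy : y ∈ A) : s (t x A) y = 0 ↔ s x y = 0 := by
  rw [h.sim_eq_mul x A hA hx y hy, mul_eq_zero, or_iff_right (h.sim_proj_pos hA hx).ne']

theorem proj_eq_of_forall_sim_eq_mul (h : IsSPStructure s t) (hA : IsSubspace s A) (hy : y ∈ A)
    (hxy : s x y ≠ 0) (hmul : ∀ v ∈ A, s x v = s x y * s y v) : t x A = y := by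
  have hx : ¬ PerpPt s x A := fun hperp => hxy (hperp y hy)
  have hsq : s x y * s (t x A) y ^ 2 = s x y := by
    rw [sq, ← mul_assoc, h.symm (t x A) y, ← hmul _ (h.proj_mem x A hA hx), h.symm y,
      ← h.sim_eq_mul x A hA hx y hy]
  rw [mul_eq_left₀ hxy, pow_eq_one_iff_of_nonneg (h.nonneg _ _) two_ne_zero] at hsq
  exact (h.eq_one_iff _ _).1 hsq

theorem proj_eq_self (h : IsSPStructure s t) (hA : IsSubspace s A) (hx : x ∈ A) : t x A = x :=
  h.proj_eq_of_forall_sim_eq_mul hA hx (by simp [h.sim_self]) (by simp [h.sim_self])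

theorem isSubspace_span_pair (h : IsSPStructure s t) (hzx : s z x = 0) :
    IsSubspace s (SpanOf s {z, x}) := by
  refine ⟨_, ?_, rfl⟩
  rintro p (rfl | rfl) q (rfl | rfl) hpq
  · exact absurd rfl hpq
  · exact hzx
  · rwa [h.symm]
  · exact absurd rfl hpq

theorem mem_span_pair_iff (h : IsSPStructure s t) (hzx : s z x = 0) :
    p ∈ SpanOf s {z, x} ↔ s p z + s p x = 1 := by
  have hne : z ≠ x := by
    rintro rfl
    simp [h.sim_self] at hzx
  have htsum : ∑' y : ({z, x} : Set Ω), s p y = s p z + s p x := by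
    rw [← Finset.coe_pair, Finset.tsum_subtype', Finset.sum_pair hne]
  rw [SpanOf, Set.mem_ofPred_eq, htsum]

theorem left_mem_span_pair (h : IsSPStructure s t) (hzx : s z x = 0) : z ∈ SpanOf s {z, x} := by
  rw [h.mem_span_pair_iff hzx, h.sim_self, hzx, add_zero]

theorem right_mem_span_pair (h : IsSPStructure s t) (hzx : s z x = 0) : x ∈ SpanOf s {z, x} := by
  rw [h.mem_span_pair_iff hzx, h.sim_self, h.symm, hzx, zero_add]

theorem sim_eq_mul_of_mem_span_pair (h : IsSPStructure s t) (hzx : s z x = 0) (hyx : s y x = 0)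
    (hp : p ∈ SpanOf s {z, x}) : s p y = s p z * s z y := by
  rw [h.symm p y, h.symm p z, h.symm z y, mul_comm]
  by_cases hy : PerpPt s y (SpanOf s {z, x})
  · rw [hy p hp, hy z (h.left_mem_span_pair hzx), zero_mul]
  have hS := h.isSubspace_span_pair hzx
  have hproj_x : s (t y (SpanOf s {z, x})) x = 0 :=
    (h.sim_proj_eq_zero_iff hS hy (h.right_mem_span_pair hzx)).2 hyx
  have hproj : t y (SpanOf s {z, x}) = z := by
    have hsum := (h.mem_span_pair_iff hzx).1 (h.proj_mem y _ hS hy)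
    rwa [hproj_x, add_zero, h.eq_one_iff] at hsum
  simpa only [hproj] using h.sim_eq_mul y _ hS hy p hp

theorem proj_eq_of_mem_span_pair (h : IsSPStructure s t) (hB : IsSubspace s B)
    (hxB : PerpPt s x B) (hb : b ∈ B) (hw : w ∈ SpanOf s {b, x}) (hwb : s w b ≠ 0) :
    t w B = b := by
  have hBx : ∀ y ∈ B, s y x = 0 := fun y hy => h.symm x y ▸ hxB y hy
  exact h.proj_eq_of_forall_sim_eq_mul hB hb hwb fun y hy =>
    h.sim_eq_mul_of_mem_span_pair (hBx b hb) (hBx y hy) hw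

theorem exists_mem_span_pair_sim_pos (h : IsSPStructure s t) (hzx : s z x = 0)
    (hpz : 0 < s p z) (hpx : 0 < s p x) : ∃ q ∈ SpanOf s {z, x}, 0 < s q z ∧ 0 < s q x := by
  have hS := h.isSubspace_span_pair hzx
  have hz := h.left_mem_span_pair hzx
  have hx := h.right_mem_span_pair hzx
  have hperp : ¬ PerpPt s p (SpanOf s {z, x}) := fun hperp => hpx.ne' (hperp x hx)
  refine ⟨t p (SpanOf s {z, x}), h.proj_mem p _ hS hperp, ?_, ?_⟩
  · exact (h.nonneg _ _).lt_of_ne' fun h0 => hpz.ne' ((h.sim_proj_eq_zero_iff hS hperp hz).1 h0)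
  · exact (h.nonneg _ _).lt_of_ne' fun h0 => hpx.ne' ((h.sim_proj_eq_zero_iff hS hperp hx).1 h0)

theorem exists_mem_span_pair_div_eq_mul (h : IsSPStructure s t) {z' : Ω} (hzx : s z x = 0)
    (hz'x : s z' x = 0) (hp : p ∈ SpanOf s {z, x}) (hpx : 0 < s p x) :
    ∃ q ∈ SpanOf s {z', x}, 0 < s q x ∧ s q z' / s q x = s z z' * (s p z / s p x) := by
  have hS := h.isSubspace_span_pair hz'x
  have hperp : ¬ PerpPt s p (SpanOf s {z', x}) := fun hperp =>
    hpx.ne' (hperp x (h.right_mem_span_pair hz'x))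
  have hmul := h.sim_eq_mul p _ hS hperp
  have hpq := h.sim_proj_pos hS hperp
  refine ⟨t p (SpanOf s {z', x}), h.proj_mem p _ hS hperp, ?_, ?_⟩
  · rw [hmul x (h.right_mem_span_pair hz'x)] at hpx
    exact pos_of_mul_pos_right hpx hpq.le
  · rw [mul_div_assoc', mul_comm (s z z'), ← h.sim_eq_mul_of_mem_span_pair hzx hz'x hp,
      hmul z' (h.left_mem_span_pair hz'x), hmul x (h.right_mem_span_pair hz'x),
      mul_div_mul_left _ _ hpq.ne']

theorem exists_mem_span_pair_div_eq_pow_mul (h : IsSPStructure s t) {z' : Ω} (hzx : s z x = 0)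
    (hz'x : s z' x = 0) (hp : p ∈ SpanOf s {z, x}) (hpx : 0 < s p x) (n : ℕ) :
    ∃ q ∈ SpanOf s {z, x}, 0 < s q x ∧ s q z / s q x = (s z z' ^ 2) ^ n * (s p z / s p x) := by
  induction n with
  | zero => exact ⟨p, hp, hpx, by simp⟩
  | succ n ih =>
    obtain ⟨q, hq, hqx, hodds⟩ := ih
    obtain ⟨q', hq', hq'x, hodds'⟩ := h.exists_mem_span_pair_div_eq_mul hzx hz'x hq hqx
    obtain ⟨q'', hq'', hq''x, hodds''⟩ := h.exists_mem_span_pair_div_eq_mul hz'x hzx hq' hq'x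
    refine ⟨q'', hq'', hq''x, ?_⟩
    rw [hodds'', hodds', hodds, h.symm z' z]
    ring

theorem exists_seq_tendsto_of_mem_span_pair (h : IsSPStructure s t) {z' : Ω} (hzx : s z x = 0)
    (hz'x : s z' x = 0) (hzz' : s z z' ≠ 0) (hne : z ≠ z') (hp : p ∈ SpanOf s {z, x})
    (hpz : 0 < s p z) (hpx : 0 < s p x) :
    ∃ w : ℕ → Ω, (∀ n, w n ∈ SpanOf s {z, x} ∧ s (w n) z ≠ 0) ∧
      Tendsto (fun n => s (w n) x) atTop (𝓝 1) := by
  choose w hw hwx hodds using h.exists_mem_span_pair_div_eq_pow_mul hzx hz'x hp hpx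
  have hlt : s z z' ^ 2 < 1 :=
    pow_lt_one₀ (h.nonneg _ _) ((h.le_one _ _).lt_of_ne (by rwa [Ne, h.eq_one_iff])) two_ne_zero
  have hodds_tendsto : Tendsto (fun n => s (w n) z / s (w n) x) atTop (𝓝 0) := by
    simpa only [hodds, zero_mul] using
      (tendsto_pow_atTop_nhds_zero_of_lt_one (sq_nonneg _) hlt).mul_const (s p z / s p x)
  have hsim : ∀ n, s (w n) x = (1 + s (w n) z / s (w n) x)⁻¹ := fun n => by
    have hsum := (h.mem_span_pair_iff hzx).1 (hw n)
    have := (hwx n).ne'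
    rw [one_add_div this, add_comm, hsum, one_div, inv_inv]
  refine ⟨w, fun n => ⟨hw n, fun h0 => ?_⟩, ?_⟩
  · have hpos : 0 < (s z z' ^ 2) ^ n * (s p z / s p x) := by positivity
    rw [← hodds, h0, zero_div] at hpos
    exact hpos.false
  · rw [tendsto_congr hsim]
    simpa using (hodds_tendsto.const_add 1).inv₀ (by simp)

theorem sim_mul_one_sub_sim_proj_le (h : IsSPStructure s t) (hφ : IsSimModulus s φ)
    (hA : IsSubspace s A) (hx : ¬ PerpPt s x A) (hw : ¬ PerpPt s w A) :
    s x (t x A) * (1 - s (t x A) (t w A)) ≤ 2 * φ (1 - s w x) := by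
  have hxw : s x (t x A) ≤ s w (t x A) + φ (1 - s w x) := by
    simpa only [h.symm] using hφ.sim_le_sim_add x w (t x A)
  have hmax := h.sim_le_sim_proj hA hw (h.proj_mem x A hA hx)
  have hwx : s w (t w A) ≤ s x (t w A) + φ (1 - s w x) := by
    simpa only [h.symm] using hφ.sim_le_sim_add w x (t w A)
  have hmul := h.sim_eq_mul x A hA hx _ (h.proj_mem w A hA hw)
  linarith

theorem eventually_not_perp (h : IsSPStructure s t) (hφ : IsSimModulus s φ)
    (hA : IsSubspace s A) (hx : ¬ PerpPt s x A) {ι : Type*} {l : Filter ι} {w : ι → Ω}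
    (hw : Tendsto (fun i => s (w i) x) l (𝓝 1)) : ∀ᶠ i in l, ¬ PerpPt s (w i) A := by
  have hφw : Tendsto (fun i => φ (1 - s (w i) x)) l (𝓝 0) :=
    hφ.tendsto_zero.comp (by simpa using hw.const_sub 1)
  filter_upwards [hφw.eventually_lt_const (h.sim_proj_pos hA hx)] with i hi hperp
  have hle := hφ.sim_le_sim_add x (w i) (t x A)
  rw [h.symm _ (w i), hperp _ (h.proj_mem x A hA hx), h.symm, h.symm x (w i)] at hle
  linarith

theorem tendsto_sim_proj (h : IsSPStructure s t) (hφ : IsSimModulus s φ)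
    (hA : IsSubspace s A) (hx : ¬ PerpPt s x A) {ι : Type*} {l : Filter ι} {w : ι → Ω}
    (hw : Tendsto (fun i => s (w i) x) l (𝓝 1)) :
    Tendsto (fun i => s (t x A) (t (w i) A)) l (𝓝 1) := by
  have hφw : Tendsto (fun i => φ (1 - s (w i) x)) l (𝓝 0) :=
    hφ.tendsto_zero.comp (by simpa using hw.const_sub 1)
  have hlower : Tendsto (fun i => 1 - 2 * φ (1 - s (w i) x) / s x (t x A)) l (𝓝 1) := by
    simpa using ((hφw.const_mul 2).div_const (s x (t x A))).const_sub 1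
  refine tendsto_of_tendsto_of_tendsto_of_le_of_le' hlower tendsto_const_nhds ?_
    (Eventually.of_forall fun i => h.le_one _ _)
  filter_upwards [h.eventually_not_perp hφ hA hx hw] with i hi
  rw [sub_le_comm, le_div_iff₀' (h.sim_proj_pos hA hx)]
  exact h.sim_mul_one_sub_sim_proj_le hφ hA hx hi

end IsSPStructure

theorem IsSimModulus.sim_le_sim_add_of_le (hφ : IsSimModulus s φ) (hr : r ≤ s b c) :
    s a b ≤ s a c + φ (1 - r) :=
  (hφ.sim_le_sim_add b c a).trans (by gcongr; exact hφ.monotone (by linarith))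

namespace IsPointedSPStructure

theorem sP_nonneg (h : IsPointedSPStructure s t sP) (hA : IsSubspace s A) (x : Ω) : 0 ≤ sP x A := by
  by_cases hx : PerpPt s x A
  · exact (h.sP_of_perp x A hA hx).ge
  · exact h.sP_of_not_perp x A hA hx ▸ h.nonneg _ _

theorem sP_le_one (h : IsPointedSPStructure s t sP) (hA : IsSubspace s A) (x : Ω) : sP x A ≤ 1 := by
  by_cases hx : PerpPt s x A
  · exact h.sP_of_perp x A hA hx ▸ zero_le_one
  · exact h.sP_of_not_perp x A hA hx ▸ h.le_one _ _

theorem sP_self (h : IsPointedSPStructure s t sP) (hA : IsSubspace s A) (hx : x ∈ A) :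
    sP x A = 1 := by
  rw [h.sP_of_not_perp x A hA (h.not_perp_of_mem hx), h.proj_eq_self hA hx, h.sim_self]

end IsPointedSPStructure

theorem tauSim_of_perp (hx : PerpPt s x A) : tauSim s t sP x A B = 1 - sP x B :=
  if_pos hx

theorem tauSim_of_not_perp (hA : ¬ PerpPt s x A) (hB : ¬ PerpPt s x B) :
    tauSim s t sP x A B = s (t x A) (t x B) := by
  rw [tauSim, if_neg hA, if_neg hB]

namespace IsPointedSPStructure

theorem tauSim_comm (h : IsPointedSPStructure s t sP) (hA : IsSubspace s A)
    (hB : IsSubspace s B) (x : Ω) : tauSim s t sP x A B = tauSim s t sP x B A := by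
  by_cases hxA : PerpPt s x A <;> by_cases hxB : PerpPt s x B <;>
    simp [tauSim, hxA, hxB, h.sP_of_perp, hA, hB, h.symm]

theorem tauSim_nonneg (h : IsPointedSPStructure s t sP) (hA : IsSubspace s A)
    (hB : IsSubspace s B) (x : Ω) : 0 ≤ tauSim s t sP x A B := by
  rw [tauSim]
  split_ifs
  · exact sub_nonneg.2 (h.sP_le_one hB x)
  · exact sub_nonneg.2 (h.sP_le_one hA x)
  · exact h.nonneg _ _

theorem tauSim_le_one (h : IsPointedSPStructure s t sP) (hA : IsSubspace s A)
    (hB : IsSubspace s B) (x : Ω) : tauSim s t sP x A B ≤ 1 := by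
  rw [tauSim]
  split_ifs
  · exact sub_le_self _ (h.sP_nonneg hB x)
  · exact sub_le_self _ (h.sP_nonneg hA x)
  · exact h.le_one _ _

theorem simSub_comm (h : IsPointedSPStructure s t sP) (hA : IsSubspace s A)
    (hB : IsSubspace s B) : simSub s t sP A B = simSub s t sP B A := by
  simp only [simSub, h.tauSim_comm hA hB]

theorem simSub_le_tauSim (h : IsPointedSPStructure s t sP) (hA : IsSubspace s A)
    (hB : IsSubspace s B) (x : Ω) : simSub s t sP A B ≤ tauSim s t sP x A B :=
  csInf_le ⟨0, Set.forall_mem_range.2 (h.tauSim_nonneg hA hB)⟩ (Set.mem_range_self x)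

theorem simSub_le_one (h : IsPointedSPStructure s t sP) (hA : IsSubspace s A)
    (hB : IsSubspace s B) (x : Ω) : simSub s t sP A B ≤ 1 :=
  (h.simSub_le_tauSim hA hB x).trans (h.tauSim_le_one hA hB x)

theorem simSub_nonneg (h : IsPointedSPStructure s t sP) (hA : IsSubspace s A)
    (hB : IsSubspace s B) : 0 ≤ simSub s t sP A B :=
  Real.sInf_nonneg (Set.forall_mem_range.2 (h.tauSim_nonneg hA hB))

theorem simSub_le_one_sub_sP (h : IsPointedSPStructure s t sP) (hA : IsSubspace s A)
    (hB : IsSubspace s B) (hx : PerpPt s x A) : simSub s t sP A B ≤ 1 - sP x B :=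
  tauSim_of_perp (t := t) (sP := sP) hx ▸ h.simSub_le_tauSim hA hB x

theorem simSub_le_sim_proj (h : IsPointedSPStructure s t sP) (hA : IsSubspace s A)
    (hB : IsSubspace s B) (hxA : ¬ PerpPt s x A) (hxB : ¬ PerpPt s x B) :
    simSub s t sP A B ≤ s (t x A) (t x B) :=
  tauSim_of_not_perp (sP := sP) hxA hxB ▸ h.simSub_le_tauSim hA hB x

theorem not_perp_of_mem_of_simSub_pos (h : IsPointedSPStructure s t sP) (hA : IsSubspace s A)
    (hB : IsSubspace s B) (hpos : 0 < simSub s t sP A B) (hx : x ∈ A) : ¬ PerpPt s x B := by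
  intro hxB
  rw [h.simSub_comm hA hB] at hpos
  have hle := h.simSub_le_one_sub_sP hB hA hxB
  rw [h.sP_self hA hx, sub_self] at hle
  exact hle.not_gt hpos

theorem simSub_le_sim_proj_of_mem (h : IsPointedSPStructure s t sP) (hA : IsSubspace s A)
    (hB : IsSubspace s B) (hx : x ∈ A) (hxB : ¬ PerpPt s x B) :
    simSub s t sP A B ≤ s x (t x B) := by
  simpa only [h.proj_eq_self hA hx] using h.simSub_le_sim_proj hA hB (h.not_perp_of_mem hx) hxB

theorem simSub_le_sim_of_tendsto (h : IsPointedSPStructure s t sP) (hφ : IsSimModulus s φ)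
    (hA : IsSubspace s A) (hB : IsSubspace s B) (hxA : ¬ PerpPt s x A) {ι : Type*}
    {l : Filter ι} [l.NeBot] {w : ι → Ω} (hw : Tendsto (fun i => s (w i) x) l (𝓝 1))
    (hwB : ∀ i, ¬ PerpPt s (w i) B) (hproj : ∀ i, t (w i) B = b) :
    simSub s t sP A B ≤ s (t x A) b := by
  have hφw : Tendsto (fun i => φ (1 - s (t x A) (t (w i) A))) l (𝓝 0) :=
    hφ.tendsto_zero.comp (by simpa using (h.tendsto_sim_proj hφ hA hxA hw).const_sub 1)
  have hlim : Tendsto (fun i => s (t x A) b + φ (1 - s (t x A) (t (w i) A))) l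
      (𝓝 (s (t x A) b)) := by
    simpa using hφw.const_add (s (t x A) b)
  refine ge_of_tendsto hlim ?_
  filter_upwards [h.eventually_not_perp hφ hA hxA hw] with i hi
  calc simSub s t sP A B ≤ s (t (w i) A) b := hproj i ▸ h.simSub_le_sim_proj hA hB hi (hwB i)
    _ ≤ s (t x A) b + φ (1 - s (t x A) (t (w i) A)) := by
      simpa only [h.symm] using hφ.sim_le_sim_add (t (w i) A) (t x A) b

theorem proj_proj_eq_of_proj_eq (h : IsPointedSPStructure s t sP) (hA : IsSubspace s A)
    (hB : IsSubspace s B) (hpos : 0 < simSub s t sP A B) (hb : b ∈ B)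
    (hisol : ∀ y ∈ B, s b y ≠ 0 → y = b) (hvA : ¬ PerpPt s v A) (hvB : ¬ PerpPt s v B)
    (hproj : t v B = b) : t (t v A) B = b := by
  have hvAB := h.not_perp_of_mem_of_simSub_pos hA hB hpos (h.proj_mem v A hA hvA)
  refine hisol _ (h.proj_mem _ B hB hvAB) fun h0 => ?_
  have hle := h.simSub_le_sim_proj hA hB hvA hvB
  rw [h.symm, h.sim_proj_eq_zero_iff hB hvAB hb] at h0
  rw [hproj, h0] at hle
  exact hle.not_gt hpos

theorem sim_proj_eq_zero_of_proj_eq (h : IsPointedSPStructure s t sP) (hA : IsSubspace s A)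
    (hB : IsSubspace s B) (hpos : 0 < simSub s t sP A B) (hb : b ∈ B)
    (hisol : ∀ y ∈ B, s b y ≠ 0 → y = b) (hvB : ¬ PerpPt s v B) (hproj : t v B = b)
    (hd : d ∈ B) (hbd : s b d = 0) (hdA : ¬ PerpPt s d A) : s v (t d A) = 0 := by
  have hgA := h.proj_mem d A hA hdA
  by_cases hvA : PerpPt s v A
  · exact hvA _ hgA
  have hvA_mem := h.proj_mem v A hA hvA
  have hvAB := h.not_perp_of_mem_of_simSub_pos hA hB hpos hvA_mem
  have hvd : s (t v A) d = 0 := by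
    rwa [← h.sim_proj_eq_zero_iff hB hvAB hd,
      h.proj_proj_eq_of_proj_eq hA hB hpos hb hisol hvA hvB hproj]
  rwa [← h.sim_proj_eq_zero_iff hA hvA hgA, h.symm, h.sim_proj_eq_zero_iff hA hdA hvA_mem, h.symm]

theorem proj_proj_eq_of_perp (h : IsPointedSPStructure s t sP) (hA : IsSubspace s A)
    (hB : IsSubspace s B) (hpos : 0 < simSub s t sP A B) (hxA : ¬ PerpPt s x A)
    (hxB : PerpPt s x B) (hb : b ∈ B) (hisol : ∀ y ∈ B, s b y ≠ 0 → y = b)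
    (hw : w ∈ SpanOf s {b, x}) (hwb : s w b ≠ 0) (hwx : s w x ≠ 0) : t (t x A) B = b := by
  have haA := h.proj_mem x A hA hxA
  have haB := h.not_perp_of_mem_of_simSub_pos hA hB hpos haA
  have hdB := h.proj_mem (t x A) B hB haB
  have had := (h.sim_proj_pos hB haB).ne'
  set d := t (t x A) B
  refine hisol d hdB fun hbd => ?_
  have hdA : ¬ PerpPt s d A := fun hperp => had (h.symm d _ ▸ hperp _ haA)
  have hgA := h.proj_mem d A hA hdA
  have hxg : s x (t d A) ≠ 0 := by
    rwa [Ne, ← h.sim_proj_eq_zero_iff hA hxA hgA, h.symm, h.sim_proj_eq_zero_iff hA hdA haA,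
      h.symm]
  have hbg : s b (t d A) = 0 :=
    h.sim_proj_eq_zero_of_proj_eq hA hB hpos hb hisol (h.not_perp_of_mem hb)
      (h.proj_eq_self hB hb) hdB hbd hdA
  have hwg : s w (t d A) = 0 :=
    h.sim_proj_eq_zero_of_proj_eq hA hB hpos hb hisol (fun hperp => hwb (hperp b hb))
      (h.proj_eq_of_mem_span_pair hB hxB hb hw hwb) hdB hbd hdA
  have hmul := h.sim_eq_mul_of_mem_span_pair (hxB b hb) (h.symm b _ ▸ hbg)
    (Set.pair_comm b x ▸ hw)
  exact mul_ne_zero hwx hxg (hmul.symm.trans hwg)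

theorem simSub_le_sim_of_mem_span_pair (h : IsPointedSPStructure s t sP)
    (hφ : IsSimModulus s φ) (hA : IsSubspace s A) (hB : IsSubspace s B)
    (hxA : ¬ PerpPt s x A) (hxB : PerpPt s x B) (hb : b ∈ B) (hw : w ∈ SpanOf s {b, x})
    (hwb : 0 < s w b) (hwx : 0 < s w x) : simSub s t sP A B ≤ s (t x A) b := by
  rcases le_or_gt (simSub s t sP A B) 0 with hle | hpos
  · exact hle.trans (h.nonneg _ _)
  by_cases hisol : ∀ y ∈ B, s b y ≠ 0 → y = b
  · have haA := h.proj_mem x A hA hxA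
    have hle := h.simSub_le_sim_proj_of_mem hA hB haA
      (h.not_perp_of_mem_of_simSub_pos hA hB hpos haA)
    rwa [h.proj_proj_eq_of_perp hA hB hpos hxA hxB hb hisol hw hwb.ne' hwx.ne'] at hle
  · push Not at hisol
    obtain ⟨z, hz, hbz, hne⟩ := hisol
    obtain ⟨v, hv, hv_tendsto⟩ := h.exists_seq_tendsto_of_mem_span_pair
      (h.symm x b ▸ hxB b hb) (h.symm x z ▸ hxB z hz) hbz hne.symm hw hwb hwx
    exact h.simSub_le_sim_of_tendsto hφ hA hB hxA hv_tendsto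
      (fun n hperp => (hv n).2 (hperp b hb))
      fun n => h.proj_eq_of_mem_span_pair hB hxB hb (hv n).1 (hv n).2

theorem one_sub_simSub_le_modulus (h : IsPointedSPStructure s t sP) (hφ : IsSimModulus s φ)
    (hA : IsSubspace s A) (hB : IsSubspace s B) (x : Ω) :
    1 - simSub s t sP A B ≤ φ (1 - simSub s t sP A B) :=
  hφ.self_le _ ⟨sub_nonneg.2 (h.simSub_le_one hA hB x), sub_le_self _ (h.simSub_nonneg hA hB)⟩

theorem sP_le_sP_add (h : IsPointedSPStructure s t sP) (hφ : IsSimModulus s φ)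
    (hB : IsSubspace s B) (hC : IsSubspace s C) (x : Ω) :
    sP x C ≤ sP x B + φ (1 - simSub s t sP B C) := by
  have hφσ := h.one_sub_simSub_le_modulus hφ hB hC x
  by_cases hxB : PerpPt s x B
  · linarith [h.simSub_le_one_sub_sP hB hC hxB, h.sP_of_perp x B hB hxB]
  by_cases hxC : PerpPt s x C
  · linarith [h.simSub_le_one hB hC x, h.sP_of_perp x C hC hxC, h.sP_nonneg hB x]
  rw [h.sP_of_not_perp x B hB hxB, h.sP_of_not_perp x C hC hxC]
  exact hφ.sim_le_sim_add_of_le (h.symm (t x B) _ ▸ h.simSub_le_sim_proj hB hC hxB hxC)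

theorem simSub_le_one_sub_sP_add (h : IsPointedSPStructure s t sP) (hφ : IsSimModulus s φ)
    (hA : IsSubspace s A) (hB : IsSubspace s B) (hC : IsSubspace s C)
    (hpos : 0 < simSub s t sP B C) (hxA : ¬ PerpPt s x A) (hxC : PerpPt s x C) :
    simSub s t sP A B ≤ 1 - sP x A + φ (1 - simSub s t sP B C) := by
  by_cases hxB : PerpPt s x B
  · have hle := h.simSub_le_one_sub_sP hB hA hxB
    rw [h.simSub_comm hB hA] at hle
    linarith [h.one_sub_simSub_le_modulus hφ hB hC x, h.simSub_le_one hB hC x]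
  have hbB := h.proj_mem x B hB hxB
  have hbC := h.not_perp_of_mem_of_simSub_pos hB hC hpos hbB
  calc simSub s t sP A B ≤ s (t x A) (t x B) := h.simSub_le_sim_proj hA hB hxA hxB
    _ ≤ s (t x A) (t (t x B) C) + φ (1 - simSub s t sP B C) :=
      hφ.sim_le_sim_add_of_le (h.simSub_le_sim_proj_of_mem hB hC hbB hbC)
    _ ≤ 1 - sP x A + φ (1 - simSub s t sP B C) := by
      have hle := h.add_le_one (t x A) x _ (hxC _ (h.proj_mem _ C hC hbC))
      rw [h.sP_of_not_perp x A hA hxA, h.symm x]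
      linarith

theorem simSub_le_sim_proj_add (h : IsPointedSPStructure s t sP) (hφ : IsSimModulus s φ)
    (hA : IsSubspace s A) (hB : IsSubspace s B) (hC : IsSubspace s C)
    (hpos : 0 < simSub s t sP B C) (hxA : ¬ PerpPt s x A) (hxC : ¬ PerpPt s x C) :
    simSub s t sP A B ≤ s (t x A) (t x C) + φ (1 - simSub s t sP B C) := by
  by_cases hxB : PerpPt s x B
  · rw [h.simSub_comm hB hC] at hpos ⊢
    have hcC := h.proj_mem x C hC hxC
    have hcB := h.not_perp_of_mem_of_simSub_pos hC hB hpos hcC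
    have hbB := h.proj_mem _ B hB hcB
    obtain ⟨w, hw, hwb, hwx⟩ := h.exists_mem_span_pair_sim_pos (h.symm x _ ▸ hxB _ hbB)
      (h.sim_proj_pos hB hcB) (h.symm x _ ▸ h.sim_proj_pos hC hxC)
    calc simSub s t sP A B ≤ s (t x A) (t (t x C) B) :=
          h.simSub_le_sim_of_mem_span_pair hφ hA hB hxA hxB hbB hw hwb hwx
      _ ≤ s (t x A) (t x C) + φ (1 - simSub s t sP C B) :=
          hφ.sim_le_sim_add_of_le (h.symm (t x C) _ ▸ h.simSub_le_sim_proj_of_mem hC hB hcC hcB)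
  · exact (h.simSub_le_sim_proj hA hB hxA hxB).trans
      (hφ.sim_le_sim_add_of_le (h.simSub_le_sim_proj hB hC hxB hxC))

theorem simSub_le_tauSim_add (h : IsPointedSPStructure s t sP) (hφ : IsSimModulus s φ)
    (hA : IsSubspace s A) (hB : IsSubspace s B) (hC : IsSubspace s C) (x : Ω) :
    simSub s t sP A B ≤ tauSim s t sP x A C + φ (1 - simSub s t sP B C) := by
  rcases le_or_gt (simSub s t sP B C) 0 with hle | hpos
  · linarith [h.simSub_le_one hA hB x, h.tauSim_nonneg hA hC x,
      h.one_sub_simSub_le_modulus hφ hB hC x]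
  by_cases hxA : PerpPt s x A
  · rw [tauSim_of_perp hxA]
    linarith [h.simSub_le_one_sub_sP hA hB hxA, h.sP_le_sP_add hφ hB hC x]
  by_cases hxC : PerpPt s x C
  · rw [h.tauSim_comm hA hC, tauSim_of_perp hxC]
    exact h.simSub_le_one_sub_sP_add hφ hA hB hC hpos hxA hxC
  · rw [tauSim_of_not_perp hxA hxC]
    exact h.simSub_le_sim_proj_add hφ hA hB hC hpos hxA hxC

end IsPointedSPStructure

theorem isSimModulus_half_sqrt_add_self
    (hcont : ∀ x y z, s z x ≤ s z y + 1 / 2 * √(1 - s x y) + (1 - s x y)) :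
    IsSimModulus s fun u => 1 / 2 * √u + u where
  monotone _ _ huv := by dsimp only; gcongr
  self_le _ _ := le_add_of_nonneg_left (by positivity)
  tendsto_zero := by
    have hcts : Continuous fun u : ℝ => 1 / 2 * √u + u := by fun_prop
    simpa using hcts.tendsto 0
  sim_le_sim_add x y z := by simpa only [add_assoc] using hcont x y z

theorem simSub_continuity_general [Nonempty Ω] (h : IsPointedSPStructure s t sP)
    (hφ : IsSimModulus s φ) (hA : IsSubspace s A) (hB : IsSubspace s B) (hC : IsSubspace s C) :
    simSub s t sP A B ≤ simSub s t sP A C + φ (1 - simSub s t sP B C) := by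
  rw [← sub_le_iff_le_add]
  refine le_csInf (Set.range_nonempty _) (Set.forall_mem_range.2 fun x => ?_)
  exact sub_le_iff_le_add.2 (h.simSub_le_tauSim_add hφ hA hB hC x)

end

/-- Continuity inequality for the subspace similarity. -/
theorem simSub_continuity [Nonempty Ω]
    (s : Ω → Ω → ℝ) (t : Ω → Set Ω → Ω) (sP : Ω → Set Ω → ℝ)
    (hval : ∀ x y : Ω, s x y ∈ Set.Icc (0 : ℝ) 1)
    (heq : ∀ x y : Ω, s x y = 1 ↔ x = y)
    (hsym : ∀ x y : Ω, s x y = s y x)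
    (hcont : ∀ x y z : Ω,
      s z x ≤ s z y + 1 / 2 * Real.sqrt (1 - s x y) + (1 - s x y))
    (hsPval : ∀ (x : Ω) (A : Set Ω), sP x A ∈ Set.Icc (0 : ℝ) 1)
    (ht_mem : ∀ (x : Ω) (A : Set Ω), IsSubspace s A → ¬ PerpPt s x A → t x A ∈ A)
    (hsP_nonperp : ∀ (x : Ω) (A : Set Ω), IsSubspace s A → ¬ PerpPt s x A →
      sP x A = s x (t x A))
    (hsP_perp : ∀ (x : Ω) (A : Set Ω), IsSubspace s A → PerpPt s x A → sP x A = 0)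
    (hfact : ∀ (x : Ω) (A : Set Ω), IsSubspace s A → ¬ PerpPt s x A →
      ∀ y ∈ A, s x y = s x (t x A) * s (t x A) y)
    (hbound2 : ∀ x y z : Ω, s y z = 0 → s x y + s x z ≤ 1)
    (hbound : ∀ (x : Ω) (A : Set Ω), IsSubspace s A → ∀ y : Ω, PerpPt s y A →
      s x y + sP x A ≤ 1) :
    ∀ A B C : Set Ω, IsSubspace s A → IsSubspace s B → IsSubspace s C →
      simSub s t sP A B ≤
        simSub s t sP A C + 1 / 2 * Real.sqrt (1 - simSub s t sP B C) +
          (1 - simSub s t sP B C) := by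
  intro A B C hA hB hC
  have h : IsPointedSPStructure s t sP :=
    ⟨⟨fun x y => (hval x y).1, fun x y => (hval x y).2, heq, hsym, ht_mem, hfact, hbound2⟩,
      hsP_nonperp, hsP_perp⟩
  simpa only [add_assoc] using
    simSub_continuity_general h (isSimModulus_half_sqrt_add_self hcont) hA hB hC
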